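/- Let A₁, A₂, A₃ be hermitian 4×4 complex matrices whose joint numerical range W = W(A₁,A₂,A₃) has dimension 3. If G is a one-dimensional nonexposed face of W, then there exists a unique two-dimensional exposed face H of W with G ⊆ H; moreover, G is an exposed face of H, and H is a non-elliptic face of W. -/

import Mathlib

open Matrix ComplexOrder

noncomputable section

/-- A density matrix: positive semidefinite with unit trace. -/
def IsDensity {n : Type*} [Fintype n] (ρ : Matrix n n ℂ) : Prop :=
  ρ.PosSemidef ∧ ρ.trace = 1

/-- The measurement map `ρ ↦ (tr ρA₁, …, tr ρA_k)` (the traces are real for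
hermitian matrices). -/
def wpt {n : Type*} [Fintype n] {k : ℕ} (A : Fin k → Matrix n n ℂ)
    (ρ : Matrix n n ℂ) : Fin k → ℝ :=
  fun i => ((ρ * A i).trace).re

/-- The joint numerical range of `k` matrices. -/
def JNR {n : Type*} [Fintype n] {k : ℕ} (A : Fin k → Matrix n n ℂ) :
    Set (Fin k → ℝ) :=
  wpt A '' {ρ | IsDensity ρ}

/-- `F` is a face of the convex set `C`: a convex subset such that whenever an
open segment between two points of `C` meets `F`, both endpoints lie in `F`. -/
def IsFaceOf {E : Type*} [AddCommGroup E] [Module ℝ E] (C F : Set E) : Prop :=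
  Convex ℝ F ∧ IsExtreme ℝ C F

/-- The dimension of a convex set: the dimension of its affine hull. -/
def convDim {E : Type*} [AddCommGroup E] [Module ℝ E] (F : Set E) : ℕ :=
  Module.finrank ℝ (affineSpan ℝ F).direction

/-- Euclidean dot product on `Fin d → ℝ`. -/
def dotR {d : ℕ} (u v : Fin d → ℝ) : ℝ := ∑ i, u i * v i

/-- `F` is an exposed face of `C`: the set of minimizers of a linear functional. -/
def IsExposedFace {d : ℕ} (C F : Set (Fin d → ℝ)) : Prop :=
  ∃ u : Fin d → ℝ, F = {x ∈ C | ∀ y ∈ C, dotR u x ≤ dotR u y}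

/-- The normal cone of `C` at `p`. -/
def normalConeAt {d : ℕ} (C : Set (Fin d → ℝ)) (p : Fin d → ℝ) :
    Set (Fin d → ℝ) :=
  {u | ∀ y ∈ C, 0 ≤ dotR (y - p) u}

/-- `p` is a corner point of `C` if the normal cone of `C` at `p` spans `ℝ^d`. -/
def IsCornerPoint {d : ℕ} (C : Set (Fin d → ℝ)) (p : Fin d → ℝ) : Prop :=
  p ∈ C ∧ Submodule.span ℝ (normalConeAt C p) = ⊤

/-- The closed unit disk of `ℝ²`. -/
def unitDisk2 : Set (Fin 2 → ℝ) := {v | v 0 ^ 2 + v 1 ^ 2 ≤ 1}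

/-- An elliptic disk in `ℝ³`: the image of the closed unit disk of `ℝ²` under an
injective affine map. -/
def IsEllipticDisk (F : Set (Fin 3 → ℝ)) : Prop :=
  ∃ f : (Fin 2 → ℝ) →ᵃ[ℝ] (Fin 3 → ℝ), Function.Injective f ∧ F = f '' unitDisk2

/-- A non-elliptic face of `W`: a two-dimensional face that is not an elliptic
disk. -/
def IsNonEllipticFace (W F : Set (Fin 3 → ℝ)) : Prop :=
  IsFaceOf W F ∧ convDim F = 2 ∧ ¬ IsEllipticDisk F

/-- A rank-3 face of the joint numerical range of `A`. -/
def IsRank3Face {k : ℕ} (A : Fin k → Matrix (Fin 4) (Fin 4) ℂ)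
    (F : Set (Fin k → ℝ)) : Prop :=
  F.Nonempty ∧ IsFaceOf (JNR A) F ∧
    ∃ P : Matrix (Fin 4) (Fin 4) ℂ, Pᴴ = P ∧ P * P = P ∧ P.rank = 3 ∧
      ∀ ρ : Matrix (Fin 4) (Fin 4) ℂ, IsDensity ρ → (wpt A ρ ∈ F ↔ P * ρ * P = ρ)

lemma aux_relint {d : ℕ} {G : Set (Fin d → ℝ)} (hc : Convex ℝ G) (hn : G.Nonempty) :
    ∃ p ∈ G, ∀ x ∈ affineSpan ℝ G, ∃ t : ℝ, 0 < t ∧ p + t • (p - x) ∈ G := by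
  obtain ⟨p, hp⟩ := hn.intrinsicInterior hc
  have hpG : p ∈ G := intrinsicInterior_subset hp
  refine ⟨p, hpG, fun x hx => ?_⟩
  obtain ⟨q, hq, rfl⟩ := mem_intrinsicInterior.1 hp
  have hmem : ∀ t : ℝ, (q : Fin d → ℝ) + t • ((q : Fin d → ℝ) - x) ∈ affineSpan ℝ G := by
    intro t
    have := AffineSubspace.vadd_mem_of_mem_direction
      (Submodule.smul_mem _ t (AffineSubspace.vsub_mem_direction q.2 hx)) q.2
    simpa [add_comm] using this
  let γ : ℝ → affineSpan ℝ G := fun t => ⟨_, hmem t⟩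
  have hγ : Continuous γ := by
    apply Continuous.subtype_mk
    fun_prop
  have h0 : γ 0 = q := by
    apply Subtype.ext
    simp [γ]
  have hev : ∀ᶠ t in nhds (0:ℝ), γ t ∈ interior ((↑) ⁻¹' G : Set (affineSpan ℝ G)) := by
    apply hγ.continuousAt.eventually
    rw [h0]
    exact isOpen_interior.mem_nhds hq
  obtain ⟨t, ht, ht0⟩ := ((hev.filter_mono nhdsWithin_le_nhds).and
    (self_mem_nhdsWithin (s := Set.Ioi (0:ℝ)))).exists
  have hmem' : γ t ∈ ((↑) ⁻¹' G : Set (affineSpan ℝ G)) := interior_subset ht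
  exact ⟨t, ht0, hmem'⟩

lemma aux_ext {d : ℕ} {C G : Set (Fin d → ℝ)} (h : IsExtreme ℝ C G) {p x : Fin d → ℝ}
    (hp : p ∈ G) (hx : x ∈ C) {t : ℝ} (ht : 0 < t) (hy : p + t • (p - x) ∈ C) : x ∈ G := by
  refine h.left_mem_of_mem_openSegment hx hy hp ?_
  refine ⟨t / (1 + t), 1 / (1 + t), by positivity, by positivity, by field_simp; ring, ?_⟩
  ext i
  simp
  field_simp
  ring

lemma aux_span {d : ℕ} {C G : Set (Fin d → ℝ)} (hc : Convex ℝ G) (h : IsExtreme ℝ C G)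
    (hn : G.Nonempty) (hd : convDim G = convDim C) : G = C := by
  obtain ⟨p, hp, hp'⟩ := aux_relint hc hn
  have hle : affineSpan ℝ G ≤ affineSpan ℝ C := affineSpan_mono _ h.subset
  have hdir : (affineSpan ℝ G).direction = (affineSpan ℝ C).direction :=
    Submodule.eq_of_le_of_finrank_eq (AffineSubspace.direction_le hle) hd
  have he : affineSpan ℝ G = affineSpan ℝ C :=
    AffineSubspace.eq_of_direction_eq_of_nonempty_of_le hdir
      ⟨p, subset_affineSpan ℝ _ hp⟩ hle
  refine h.subset.antisymm fun x hx => ?_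
  obtain ⟨t, ht, hy⟩ := hp' x (he ▸ subset_affineSpan ℝ _ hx)
  exact aux_ext h hp hx ht (h.subset hy)

lemma convDim_mono {d : ℕ} {C G : Set (Fin d → ℝ)} (h : G ⊆ C) : convDim G ≤ convDim C :=
  Submodule.finrank_mono (AffineSubspace.direction_le (affineSpan_mono _ h))

lemma dotR_add {d : ℕ} (u v w : Fin d → ℝ) : dotR u (v + w) = dotR u v + dotR u w := by
  simp [dotR, mul_add, Finset.sum_add_distrib]

lemma dotR_smul {d : ℕ} (u v : Fin d → ℝ) (a : ℝ) : dotR u (a • v) = a * dotR u v := by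
  simp only [dotR, Finset.mul_sum, Pi.smul_apply, smul_eq_mul]
  exact Finset.sum_congr rfl fun i _ => by ring

lemma add_dotR {d : ℕ} (u v w : Fin d → ℝ) : dotR (u + v) w = dotR u w + dotR v w := by
  simp [dotR, add_mul, Finset.sum_add_distrib]

lemma aux_sep {d : ℕ} {C G : Set (Fin d → ℝ)} (hC : Convex ℝ C) (hc : Convex ℝ G)
    (h : IsExtreme ℝ C G) (hn : G.Nonempty) (hne : G ≠ C) :
    ∃ u : Fin d → ℝ, (∀ x ∈ G, ∀ y ∈ C, dotR u x ≤ dotR u y) ∧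
      ∃ x ∈ G, ∃ y ∈ C, dotR u x < dotR u y := by
  obtain ⟨p, hp, hp'⟩ := aux_relint hc hn
  have hpC := h.subset hp
  let V := vectorSpan ℝ C
  let D : Set V := {v | p + (v : Fin d → ℝ) ∈ C}
  have hDc : Convex ℝ D := by
    intro v hv w hw a b ha hb hab
    have := hC hv hw ha hb hab
    show p + ((a • v + b • w : V) : Fin d → ℝ) ∈ C
    convert this using 1
    simp only [Submodule.coe_add, Submodule.coe_smul, smul_add]
    rw [add_add_add_comm, ← add_smul, hab, one_smul]
  have hsub : ∀ x ∈ C, x - p ∈ V := fun x hx => vsub_mem_vectorSpan ℝ hx hpC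
  have h0D : (0 : V) ∈ D := by simpa [D] using hpC
  have hspan : Submodule.span ℝ D = ⊤ := by
    rw [eq_top_iff]
    have hV : V = Submodule.span ℝ ((fun x => x - p) '' C) :=
      vectorSpan_eq_span_vsub_set_right ℝ hpC
    have himg : (fun x => x - p) '' C = V.subtype '' D := by
      ext v
      constructor
      · rintro ⟨x, hx, rfl⟩
        exact ⟨⟨x - p, hsub x hx⟩, by simpa [D] using hx, rfl⟩
      · rintro ⟨v, hv, rfl⟩
        exact ⟨p + v, hv, by simp⟩
    rintro v -
    have hv : (v : Fin d → ℝ) ∈ (Submodule.span ℝ D).map V.subtype := by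
      rw [Submodule.map_span, ← himg, ← hV]
      exact v.2
    obtain ⟨w, hw, hwv⟩ := hv
    have : w = v := Subtype.ext hwv
    exact this ▸ hw
  have haff : affineSpan ℝ D = ⊤ := by
    have hle : D ⊆ affineSpan ℝ D := subset_affineSpan ℝ D
    have : (affineSpan ℝ D).direction = ⊤ := by
      rw [eq_top_iff, ← hspan, Submodule.span_le]
      intro v hv
      have := AffineSubspace.vsub_mem_direction (hle hv) (hle h0D)
      simpa using this
    exact (AffineSubspace.direction_eq_top_iff_of_nonempty ⟨0, hle h0D⟩).1 this
  have hint : (interior D).Nonempty := (hDc.interior_nonempty_iff_affineSpan_eq_top).2 haff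
  have h0 : (0 : V) ∉ interior D := by
    intro h0
    apply hne
    refine h.subset.antisymm fun x hx => ?_
    let v : V := ⟨x - p, hsub x hx⟩
    have hcont : Continuous (fun t : ℝ => -(t • v)) := by fun_prop
    have hev : ∀ᶠ t in nhds (0:ℝ), -(t • v) ∈ interior D := by
      apply hcont.continuousAt.eventually
      simpa using isOpen_interior.mem_nhds h0
    obtain ⟨t, ht, ht0⟩ := ((hev.filter_mono nhdsWithin_le_nhds).and
      (self_mem_nhdsWithin (s := Set.Ioi (0:ℝ)))).exists
    have hy : -(t • v) ∈ D := interior_subset ht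
    change p + ((-(t • v) : V) : Fin d → ℝ) ∈ C at hy
    refine aux_ext h hp hx ht0 ?_
    convert hy using 2
    simp [v, smul_sub]
  obtain ⟨f, hf⟩ := geometric_hahn_banach_open_point hDc.interior isOpen_interior h0
  rw [map_zero] at hf
  have hfD : ∀ v ∈ D, f v ≤ 0 := by
    intro v hv
    have hcl : v ∈ closure (interior D) := by
      rw [hDc.closure_interior_eq_closure_of_nonempty_interior hint]
      exact subset_closure hv
    have : closure (interior D) ⊆ {v | f v ≤ 0} :=
      closure_minimal (fun w hw => (hf w hw).le) (isClosed_le f.continuous continuous_const)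
    exact this hcl
  obtain ⟨g, hg⟩ := LinearMap.exists_extend (f : V →ₗ[ℝ] ℝ)
  have hg' : ∀ v : V, g v = f v := fun v => by
    have := LinearMap.congr_fun hg v
    simpa using this
  let u : Fin d → ℝ := fun i => - g (Pi.single i 1)
  have hu : ∀ x, dotR u x = - g x := by
    intro x
    have := LinearMap.pi_apply_eq_sum_univ g x
    rw [this]
    simp only [dotR, u, ← Finset.sum_neg_distrib]
    refine Finset.sum_congr rfl fun i _ => ?_
    have : (Pi.single i 1 : Fin d → ℝ) = fun j => if i = j then 1 else 0 := by
      ext j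
      simp [Pi.single_apply, eq_comm]
    rw [this, smul_eq_mul]
    ring
  have hmin : ∀ y ∈ C, dotR u p ≤ dotR u y := by
    intro y hy
    have h1 := hfD ⟨y - p, hsub y hy⟩ (by simpa [D] using hy)
    rw [← hg'] at h1
    simp only [map_sub] at h1
    rw [hu, hu]
    linarith
  refine ⟨u, ?_, p, hp, ?_⟩
  · intro x hx y hy
    obtain ⟨t, ht, hz⟩ := hp' x (subset_affineSpan ℝ _ hx)
    have h1 := hmin _ (h.subset hz)
    have h2 := hmin _ hy
    rw [hu, hu] at *
    simp only [map_add, map_smul, map_sub, smul_eq_mul] at h1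
    have h3 : t * (g p - g x) ≤ 0 := by linarith
    have : g p - g x ≤ 0 := by
      by_contra! hcon
      have := mul_pos ht hcon
      linarith
    linarith
  · obtain ⟨v, hv⟩ := hint
    have hvD : v ∈ D := interior_subset hv
    refine ⟨p + v, hvD, ?_⟩
    have := hf v hv
    rw [← hg'] at this
    rw [hu, hu, map_add]
    linarith

/-- The set of minimizers. -/
def minSet {d : ℕ} (C : Set (Fin d → ℝ)) (u : Fin d → ℝ) : Set (Fin d → ℝ) :=
  {x ∈ C | ∀ y ∈ C, dotR u x ≤ dotR u y}

lemma minSet_convex {d : ℕ} {C : Set (Fin d → ℝ)} (hC : Convex ℝ C) (u : Fin d → ℝ) :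
    Convex ℝ (minSet C u) := by
  intro x hx y hy a b ha hb hab
  refine ⟨hC hx.1 hy.1 ha hb hab, fun z hz => ?_⟩
  rw [dotR_add, dotR_smul, dotR_smul]
  have h1 := mul_le_mul_of_nonneg_left (hx.2 z hz) ha
  have h2 := mul_le_mul_of_nonneg_left (hy.2 z hz) hb
  have : dotR u z = a * dotR u z + b * dotR u z := by rw [← add_mul, hab, one_mul]
  linarith

lemma minSet_extreme {d : ℕ} (C : Set (Fin d → ℝ)) (u : Fin d → ℝ) :
    IsExtreme ℝ C (minSet C u) := by
  refine ⟨fun x hx => hx.1, ?_⟩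
  rintro x hx y hy z hz ⟨a, b, ha, hb, hab, rfl⟩
  refine ⟨hx, fun w hw => ?_⟩
  have h1 := hz.2 w hw
  have h2 := hz.2 y hy
  rw [dotR_add, dotR_smul, dotR_smul] at h1 h2
  have hx1 : a = 1 - b := by linarith
  subst hx1
  have h3 : dotR u x ≤ dotR u y := by
    have : (1 - b) * (dotR u x - dotR u y) ≤ 0 := by linarith
    by_contra! hcon
    have := mul_pos ha (sub_pos.2 hcon)
    linarith
  have h4 := mul_le_mul_of_nonneg_left h3 hb.le
  linarith

lemma ext_of_subset {d : ℕ} {C K G : Set (Fin d → ℝ)} (h : IsExtreme ℝ C G) (hGK : G ⊆ K)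
    (hKC : K ⊆ C) : IsExtreme ℝ K G := h.mono hKC hGK

lemma minSet_inter {d : ℕ} {C : Set (Fin d → ℝ)} {u v : Fin d → ℝ}
    (hn : (minSet C u ∩ minSet C v).Nonempty) :
    minSet C u ∩ minSet C v = minSet C (u + v) := by
  obtain ⟨p, hp, hp'⟩ := hn
  ext x
  constructor
  · rintro ⟨h1, h2⟩
    refine ⟨h1.1, fun y hy => ?_⟩
    rw [add_dotR, add_dotR]
    exact add_le_add (h1.2 y hy) (h2.2 y hy)
  · rintro ⟨h1, h2⟩
    have h3 := h2 p hp.1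
    rw [add_dotR, add_dotR] at h3
    have h4 := hp.2 x h1
    have h5 := hp'.2 x h1
    refine ⟨⟨h1, fun y hy => ?_⟩, ⟨h1, fun y hy => ?_⟩⟩
    · have := hp.2 y hy
      linarith
    · have := hp'.2 y hy
      linarith

lemma JNR_convex {k : ℕ} (A : Fin k → Matrix (Fin 4) (Fin 4) ℂ) : Convex ℝ (JNR A) := by
  rintro _ ⟨ρ, hρ, rfl⟩ _ ⟨σ, hσ, rfl⟩ a b ha hb hab
  refine ⟨(a : ℂ) • ρ + (b : ℂ) • σ, ⟨?_, ?_⟩, ?_⟩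
  · exact (hρ.1.smul (by exact_mod_cast ha)).add (hσ.1.smul (by exact_mod_cast hb))
  · rw [trace_add, trace_smul, trace_smul, hρ.2, hσ.2]
    simp only [smul_eq_mul, mul_one]
    exact_mod_cast hab
  · ext i
    simp [wpt, add_mul, trace_add, trace_smul]

lemma disk_face {H G : Set (Fin 3 → ℝ)} (hE : IsEllipticDisk H) (hc : Convex ℝ G)
    (h : IsExtreme ℝ H G) {a b : Fin 3 → ℝ} (ha : a ∈ G) (hb : b ∈ G) (hab : a ≠ b) :
    G = H := by
  obtain ⟨f, hf, rfl⟩ := hE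
  obtain ⟨a', ha', rfl⟩ := h.subset ha
  obtain ⟨b', hb', rfl⟩ := h.subset hb
  have hab' : a' ≠ b' := fun h => hab (by rw [h])
  set m : Fin 2 → ℝ := midpoint ℝ a' b' with hm
  have hmG : f m ∈ G := by
    rw [hm, AffineMap.map_midpoint]
    exact hc.midpoint_mem ha hb
  have hmi : ∀ i, m i = (a' i + b' i) / 2 := by
    intro i
    simp [hm, midpoint_eq_smul_add]
    ring
  have hlt : m 0 ^ 2 + m 1 ^ 2 < 1 := by
    rw [hmi, hmi]
    have h1 : a' 0 ^ 2 + a' 1 ^ 2 ≤ 1 := ha'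
    have h2 : b' 0 ^ 2 + b' 1 ^ 2 ≤ 1 := hb'
    have h3 : 0 < (a' 0 - b' 0) ^ 2 + (a' 1 - b' 1) ^ 2 := by
      by_contra! hcon
      apply hab'
      have e0 : a' 0 - b' 0 = 0 := by
        nlinarith [sq_nonneg (a' 0 - b' 0), sq_nonneg (a' 1 - b' 1)]
      have e1 : a' 1 - b' 1 = 0 := by
        nlinarith [sq_nonneg (a' 0 - b' 0), sq_nonneg (a' 1 - b' 1)]
      ext i
      fin_cases i
      · exact sub_eq_zero.1 e0
      · exact sub_eq_zero.1 e1
    nlinarith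
  refine h.subset.antisymm ?_
  rintro _ ⟨c, hcD, rfl⟩
  have hcont : Continuous (fun t : ℝ => (m 0 + t * (m 0 - c 0)) ^ 2
    + (m 1 + t * (m 1 - c 1)) ^ 2) := by fun_prop
  have hev : ∀ᶠ t in nhds (0:ℝ), (m 0 + t * (m 0 - c 0)) ^ 2
      + (m 1 + t * (m 1 - c 1)) ^ 2 < 1 := by
    apply hcont.continuousAt.eventually_lt continuousAt_const
    simpa using hlt
  obtain ⟨t, ht, ht0⟩ := ((hev.filter_mono nhdsWithin_le_nhds).and
    (self_mem_nhdsWithin (s := Set.Ioi (0:ℝ)))).exists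
  refine aux_ext h hmG ⟨c, hcD, rfl⟩ ht0 ⟨m + t • (m - c), ht.le, ?_⟩
  have e : m + t • (m - c) = AffineMap.lineMap m c (-t) := by
    ext i
    simp [AffineMap.lineMap_apply]
    ring
  rw [e, AffineMap.apply_lineMap]
  ext i
  simp [AffineMap.lineMap_apply]
  ring

/-- every one-dimensional nonexposed face `G` of `W` is contained
in a unique two-dimensional exposed face `H` of `W`; moreover `G` is an exposed
face of `H` and `H` is a non-elliptic face of `W`. -/
theorem stmt19 (A : Fin 3 → Matrix (Fin 4) (Fin 4) ℂ)
    (hA : ∀ i, (A i).IsHermitian)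
    (hdim : convDim (JNR A) = 3)
    (G : Set (Fin 3 → ℝ))
    (hG : IsFaceOf (JNR A) G) (hGd : convDim G = 1)
    (hGne : ¬ IsExposedFace (JNR A) G) :
    ∃ H : Set (Fin 3 → ℝ),
      (IsExposedFace (JNR A) H ∧ convDim H = 2 ∧ G ⊆ H) ∧
      (∀ H', IsExposedFace (JNR A) H' → convDim H' = 2 → G ⊆ H' → H' = H) ∧
      IsExposedFace H G ∧ IsNonEllipticFace (JNR A) H := by
  classical
  have hW := JNR_convex A
  have hGn : G.Nonempty := by
    rw [Set.nonempty_iff_ne_empty]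
    rintro rfl
    rw [convDim, direction_affineSpan, vectorSpan_empty, finrank_bot] at hGd
    omega
  have key : ∀ C : Set (Fin 3 → ℝ), Convex ℝ C → IsExtreme ℝ C G → G ≠ C →
      ∃ u, G ⊆ minSet C u ∧ convDim (minSet C u) < convDim C := by
    intro C hC hCG hne
    obtain ⟨u, hu, x, hx, y, hy, hxy⟩ := aux_sep hC hG.1 hCG hGn hne
    have hsub : G ⊆ minSet C u := fun z hz => ⟨hCG.subset hz, hu z hz⟩
    refine ⟨u, hsub, lt_of_le_of_ne (convDim_mono fun z hz => hz.1) fun he => ?_⟩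
    have := aux_span (minSet_convex hC u) (minSet_extreme C u) (hGn.mono hsub) he
    rw [← this] at hy
    exact absurd (hy.2 x (hCG.subset hx)) (not_le.2 hxy)
  have hGW : G ≠ JNR A := by
    rintro rfl
    omega
  -- exposed faces strictly containing `G`
  have big : ∀ u, G ⊆ minSet (JNR A) u → 2 ≤ convDim (minSet (JNR A) u) := by
    intro u hu
    have h1 := convDim_mono hu
    by_contra! hcon
    apply hGne
    have he : convDim G = convDim (minSet (JNR A) u) := by omega
    exact ⟨u, aux_span hG.1 (ext_of_subset hG.2 hu fun z hz => hz.1) hGn he⟩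
  obtain ⟨u, hu, hud⟩ := key _ hW hG.2 hGW
  have hud2 : convDim (minSet (JNR A) u) = 2 := by
    have := big u hu
    omega
  have hHc := minSet_convex hW u
  have hHe := minSet_extreme (JNR A) u
  have hGH : IsExtreme ℝ (minSet (JNR A) u) G := ext_of_subset hG.2 hu fun z hz => hz.1
  have hGneH : G ≠ minSet (JNR A) u := fun h => hGne ⟨u, h⟩
  refine ⟨minSet (JNR A) u, ⟨⟨u, rfl⟩, hud2, hu⟩, ?_, ?_, ⟨hHc, hHe⟩, hud2, ?_⟩
  · rintro H' ⟨v, hv⟩ hd' hGH'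
    change H' = minSet (JNR A) v at hv
    subst hv
    have hGK := Set.subset_inter hu hGH'
    have hK := minSet_inter (hGn.mono hGK)
    have hGK' := hK ▸ hGK
    have h2 := big _ hGK'
    have hKu : minSet (JNR A) (u + v) ⊆ minSet (JNR A) u := hK ▸ Set.inter_subset_left
    have hKv : minSet (JNR A) (u + v) ⊆ minSet (JNR A) v := hK ▸ Set.inter_subset_right
    have e1 := aux_span (minSet_convex hW (u + v))
      (ext_of_subset (minSet_extreme _ _) hKu fun z hz => hz.1) (hGn.mono hGK')
      (by have := convDim_mono hKu; omega)
    have e2 := aux_span (minSet_convex hW (u + v))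
      (ext_of_subset (minSet_extreme _ _) hKv fun z hz => hz.1) (hGn.mono hGK')
      (by have := convDim_mono hKv; omega)
    exact e2.symm.trans e1
  · obtain ⟨v, hv, hvd⟩ := key _ hHc hGH hGneH
    refine ⟨v, aux_span hG.1 (ext_of_subset hGH hv fun z hz => hz.1) hGn ?_⟩
    have := convDim_mono hv
    change convDim G = convDim (minSet (minSet (JNR A) u) v)
    omega
  · intro hE
    have hnt : G.Nontrivial := by
      rw [← Set.not_subsingleton_iff]
      intro hs
      obtain ⟨p, hp⟩ := hGn
      have : G = {p} := hs.eq_singleton_of_mem hp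
      rw [this] at hGd
      rw [convDim, direction_affineSpan, vectorSpan_singleton, finrank_bot] at hGd
      omega
    obtain ⟨a, ha, b, hb, hab⟩ := hnt
    exact hGneH (disk_face hE hG.1 hGH ha hb hab)
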